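/- In the stylized fleet model, the relaxed value is monotone in the initial vehicle distribution: for every horizon t̄, interval t ∈ {1,…,t̄}, demand profile D, and initial distributions N, Ñ : R → ℝ≥0 with N(i) ≤ Ñ(i) for all i ∈ R, one has V̂_t(N; D) ≤ V̂_t(Ñ; D). (Extra vehicles can replicate the relocation destinations of a given policy without serving customers, so additional supply never decreases the optimal number of completed requests.) -/

import Mathlib

/-! Stylized fleet model of "Online Relocating and Matching of Ride-Hailing
Services: A Model-Based Modular Approach". -/

open Finset

/-- A relaxed policy in the stylized fleet model: matched flows `M`, relocation
flows `E` and induced vehicle distributions `N` over intervals `t, …, tbar`,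
starting from the initial distribution `N0`. -/
def IsRelaxedPolicy (R : Type*) [Fintype R] (tbar t : ℕ) (D : ℕ → R → R → ℝ)
    (N0 : R → ℝ) (M E : ℕ → R → R → ℝ) (N : ℕ → R → ℝ) : Prop :=
  (∀ i, N t i = N0 i) ∧
  (∀ s ∈ Finset.Icc t tbar, ∀ j, N (s + 1) j = ∑ i, (M s i j + E s i j)) ∧
  (∀ s ∈ Finset.Icc t tbar, ∀ i j, 0 ≤ M s i j) ∧
  (∀ s ∈ Finset.Icc t tbar, ∀ i j, 0 ≤ E s i j) ∧
  (∀ s ∈ Finset.Icc t tbar, ∀ i j, M s i j ≤ D s i j) ∧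
  (∀ s ∈ Finset.Icc t tbar, ∀ i, ∑ j, (M s i j + E s i j) = N s i)

/-- The objective of a policy: the total number of completed requests over
intervals `t, …, tbar`. -/
noncomputable def policyObj (R : Type*) [Fintype R] (tbar t : ℕ)
    (M : ℕ → R → R → ℝ) : ℝ :=
  ∑ s ∈ Finset.Icc t tbar, ∑ i, ∑ j, M s i j

/-- The relaxed value `V̂_t(N0; D)`. -/
noncomputable def relaxedValue (R : Type*) [Fintype R] (tbar t : ℕ)
    (D : ℕ → R → R → ℝ) (N0 : R → ℝ) : ℝ :=
  sSup {v : ℝ | ∃ M E N, IsRelaxedPolicy R tbar t D N0 M E N ∧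
    v = policyObj R tbar t M}

/-! Policies superpose: flows and vehicle distributions add up, and so do the demands they respect.
Adding to a policy for `N0` the policy under which the surplus vehicles `N0' - N0` relocate forever
from their node to itself yields a policy for `N0'` with the same matched flow, hence the same
objective. -/

section

variable {R : Type*} [Fintype R] {tbar t : ℕ} {D D' : ℕ → R → R → ℝ} {N0 N0' : R → ℝ}
  {M M' E E' : ℕ → R → R → ℝ} {N N' : ℕ → R → ℝ}

theorem policyObj_le_policyObj (h : ∀ s ∈ Icc t tbar, ∀ i j, M s i j ≤ M' s i j) :
    policyObj R tbar t M ≤ policyObj R tbar t M' :=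
  sum_le_sum fun s hs => sum_le_sum fun i _ => sum_le_sum fun j _ => h s hs i j

namespace IsRelaxedPolicy

theorem policyObj_le_policyObj_demand (h : IsRelaxedPolicy R tbar t D N0 M E N) :
    policyObj R tbar t M ≤ policyObj R tbar t D := by
  obtain ⟨-, -, -, -, hMD, -⟩ := h
  exact policyObj_le_policyObj hMD

theorem policyObj_le_relaxedValue (h : IsRelaxedPolicy R tbar t D N0 M E N) :
    policyObj R tbar t M ≤ relaxedValue R tbar t D N0 := by
  refine le_csSup ⟨policyObj R tbar t D, ?_⟩ ⟨M, E, N, h, rfl⟩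
  rintro _ ⟨M', E', N', h', rfl⟩
  exact h'.policyObj_le_policyObj_demand

theorem add (h : IsRelaxedPolicy R tbar t D N0 M E N)
    (h' : IsRelaxedPolicy R tbar t D' N0' M' E' N') :
    IsRelaxedPolicy R tbar t (D + D') (N0 + N0') (M + M') (E + E') (N + N') := by
  obtain ⟨hinit, hnext, hM, hE, hMD, hout⟩ := h
  obtain ⟨hinit', hnext', hM', hE', hMD', hout'⟩ := h'
  refine ⟨fun i => congrArg₂ (· + ·) (hinit i) (hinit' i), fun s hs j => ?_,
    fun s hs i j => add_nonneg (hM s hs i j) (hM' s hs i j),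
    fun s hs i j => add_nonneg (hE s hs i j) (hE' s hs i j),
    fun s hs i j => add_le_add (hMD s hs i j) (hMD' s hs i j), fun s hs i => ?_⟩
  · simp only [Pi.add_apply, hnext s hs, hnext' s hs, ← sum_add_distrib, add_add_add_comm]
  · simp only [Pi.add_apply, ← hout s hs, ← hout' s hs, ← sum_add_distrib, add_add_add_comm]

theorem idle [DecidableEq R] (hD : ∀ s ∈ Icc t tbar, ∀ i j, 0 ≤ D s i j) (hN0 : 0 ≤ N0) :
    IsRelaxedPolicy R tbar t D N0 0 (fun _ i => Pi.single i (N0 i)) (fun _ => N0) := by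
  have hE (i : R) : (0 : R → ℝ) ≤ Pi.single i (N0 i) := Pi.single_nonneg.mpr (hN0 i)
  exact ⟨fun _ => rfl, fun _ _ _ => by simp, fun _ _ _ _ => le_rfl, fun _ _ i j => hE i j, hD,
    fun _ _ _ => by simp⟩

theorem add_vehicles [DecidableEq R] (h : IsRelaxedPolicy R tbar t D N0 M E N) (hle : N0 ≤ N0') :
    IsRelaxedPolicy R tbar t D N0' M (E + fun _ i => Pi.single i ((N0' - N0) i))
      (N + fun _ => N0' - N0) := by
  have hsurplus : IsRelaxedPolicy R tbar t 0 (N0' - N0) 0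
      (fun _ i => Pi.single i ((N0' - N0) i)) (fun _ => N0' - N0) :=
    idle (fun _ _ _ _ => le_rfl) (sub_nonneg.mpr hle)
  simpa only [add_zero, add_sub_cancel] using h.add hsurplus

end IsRelaxedPolicy

theorem relaxedValue_le {c : ℝ} (hex : ∃ M E N, IsRelaxedPolicy R tbar t D N0 M E N)
    (hc : ∀ M E N, IsRelaxedPolicy R tbar t D N0 M E N → policyObj R tbar t M ≤ c) :
    relaxedValue R tbar t D N0 ≤ c := by
  obtain ⟨M₀, E₀, N₀, h₀⟩ := hex
  refine csSup_le ⟨_, M₀, E₀, N₀, h₀, rfl⟩ ?_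
  rintro _ ⟨M, E, N, h, rfl⟩
  exact hc M E N h

end

/-- The relaxed value is monotone in the initial vehicle distribution:
additional supply never decreases the optimal number of completed requests. -/
theorem relaxedValue_mono (R : Type*) [Fintype R] [Nonempty R]
    (tbar t : ℕ) (ht : t ∈ Finset.Icc 1 tbar)
    (D : ℕ → R → R → ℝ) (hD : ∀ s i j, 0 ≤ D s i j)
    (N0 N0' : R → ℝ) (hN0 : ∀ i, 0 ≤ N0 i)
    (hle : ∀ i, N0 i ≤ N0' i) :
    relaxedValue R tbar t D N0 ≤ relaxedValue R tbar t D N0' := by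
  classical
  have hidle := IsRelaxedPolicy.idle (t := t) (tbar := tbar) (fun s _ => hD s) hN0
  exact relaxedValue_le ⟨_, _, _, hidle⟩ fun _ _ _ h =>
    (h.add_vehicles hle).policyObj_le_relaxedValue
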